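/- arXiv:2302.11331 — 2 statements merged into one kernel-verified Lean document; each statement's English description precedes it below -/
import Mathlib

section
/- Let q, D, N ≥ 1 and let γ_n (1 ≤ n ≤ N) be complex numbers. Then ∑_{d ~ D, (d,q)=1} ∑_{ν: ν²+1 ≡ 0 (mod d)} |∑_{n ≤ N} γ_n e(νn q̅/d)|² ≪ (qD + N) ∑_{n ≤ N} |γ_n|², where q̅ denotes the inverse of q modulo d and e(x) = e^{2πix}, and d ~ D means D < d ≤ 2D. -/
open scoped Real

/-!
By Gauss, a root `ν` of `X² + 1` modulo `d` comes from a primitive representation `d = r² + s²` with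
`r ≡ ν s (mod d)`, and one may take `|r| ≤ s`. If `q a ≡ ν (mod d)`, then
`a / d = r / (q s d) + m / (q s)` for an integer `m` with `r m ≡ -1 (mod s)`. The first term is
`O(1 / (q D))` and the denominators in the second are `O(q √D)`, so after splitting the first term
into boundedly many ranges the points `a / d` of one range are `1 / (4 q D)`-spaced modulo one, and
the large sieve for well-spaced points applies to each range.

The large sieve itself is Parseval's identity on the points `k / M`: each `x` is moved to a nearest
such point at the cost, by partial summation, of a factor of size `O(1)` on average.
-/

section LargeSieve

/-- The exponential polynomial `S_N(x) = ∑_{n < N} γ_n e(n x)`, `e(x) = exp(2πix)`, with the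
frequency variable `x` taken in `ℝ/ℤ`. -/
noncomputable def expSum (γ : ℕ → ℂ) (N : ℕ) (x : UnitAddCircle) : ℂ :=
  ∑ n ∈ Finset.range N, γ n * (x.toCircle : ℂ) ^ n

theorem norm_toCircle_sub_one_le (x : UnitAddCircle) :
    ‖(x.toCircle : ℂ) - 1‖ ≤ 2 * π * ‖x‖ := by
  obtain ⟨y, rfl⟩ : ∃ y : ℝ, (y : UnitAddCircle) = x := QuotientAddGroup.mk_surjective x
  have hy : ((y - round y : ℝ) : UnitAddCircle) = y := by
    rw [AddCircle.coe_sub, sub_eq_self, AddCircle.coe_eq_zero_iff]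
    exact ⟨round y, by rw [zsmul_one]⟩
  calc ‖(AddCircle.toCircle (y : UnitAddCircle) : ℂ) - 1‖
      = ‖Complex.exp (Complex.I * (2 * π * (y - round y) : ℝ)) - 1‖ := by
        rw [← hy, AddCircle.toCircle_apply_mk, Circle.coe_exp, div_one, mul_comm Complex.I]
    _ ≤ ‖2 * π * (y - round y)‖ := Real.norm_exp_I_mul_ofReal_sub_one_le
    _ = 2 * π * ‖(y : UnitAddCircle)‖ := by
        rw [UnitAddCircle.norm_eq, norm_mul, Real.norm_of_nonneg Real.two_pi_pos.le,
          Real.norm_eq_abs]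

theorem exists_norm_sub_toAddCircle_le (M : ℕ) [NeZero M] (x : UnitAddCircle) :
    ∃ k : ZMod M, ‖x - ZMod.toAddCircle k‖ ≤ 1 / (2 * M) := by
  have hM : (0 : ℝ) < M := by exact_mod_cast NeZero.pos M
  obtain ⟨y, rfl⟩ : ∃ y : ℝ, (y : UnitAddCircle) = x := QuotientAddGroup.mk_surjective x
  refine ⟨round (M * y), ?_⟩
  calc ‖(y : UnitAddCircle) - ZMod.toAddCircle (round (M * y) : ZMod M)‖
      ≤ |y - round (M * y) / M| := by
        rw [ZMod.toAddCircle_intCast, ← AddCircle.coe_sub, UnitAddCircle.norm_eq]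
        simpa only [Int.cast_zero, sub_zero] using round_le (y - round (M * y) / M : ℝ) 0
    _ = |M * y - round (M * y)| / M := by
        rw [← abs_of_pos hM, ← abs_div, abs_of_pos hM, sub_div, mul_div_cancel_left₀ _ hM.ne']
    _ ≤ (1 / 2) / M := by
        gcongr
        exact abs_sub_round _
    _ = 1 / (2 * M) := div_div _ _ _

theorem sum_norm_sq_sum_mul_stdAddChar_pow {M : ℕ} [NeZero M] {S : Finset ℕ}
    (hS : Set.InjOn (Nat.cast : ℕ → ZMod M) S) (γ : ℕ → ℂ) :
    ∑ k : ZMod M, ‖∑ n ∈ S, γ n * ZMod.stdAddChar k ^ n‖ ^ 2 = M * ∑ n ∈ S, ‖γ n‖ ^ 2 := by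
  have orthogonality : ∀ n ∈ S, ∀ m ∈ S,
      ∑ k : ZMod M, ZMod.stdAddChar k ^ n * (starRingEnd ℂ) (ZMod.stdAddChar k ^ m) =
        if n = m then (M : ℂ) else 0 := by
    intro n hn m hm
    calc _ = ∑ k : ZMod M, ZMod.stdAddChar (k * (n - m : ZMod M)) := by
          refine Finset.sum_congr rfl fun k _ => ?_
          rw [← AddChar.map_nsmul_eq_pow, ← AddChar.map_nsmul_eq_pow, ← AddChar.map_neg_eq_conj,
            ← AddChar.map_add_eq_mul]
          congr 1
          simp only [nsmul_eq_mul]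
          ring
      _ = _ := by
          rw [AddChar.sum_mulShift _ (ZMod.isPrimitive_stdAddChar M)]
          simp only [sub_eq_zero, hS.eq_iff hn hm, ZMod.card, Nat.cast_ite, Nat.cast_zero]
  rw [← Complex.ofReal_inj]
  push_cast
  simp_rw [← Complex.mul_conj', map_sum, map_mul, Finset.sum_mul_sum]
  rw [Finset.sum_comm, Finset.mul_sum]
  refine Finset.sum_congr rfl fun n hn => ?_
  calc _ = ∑ m ∈ S, γ n * (starRingEnd ℂ) (γ m) * if n = m then (M : ℂ) else 0 := by
        rw [Finset.sum_comm]
        refine Finset.sum_congr rfl fun m hm => ?_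
        rw [← orthogonality n hn m hm, Finset.mul_sum]
        exact Finset.sum_congr rfl fun k _ => by ring
    _ = M * (γ n * (starRingEnd ℂ) (γ n)) := by
        simp only [mul_ite, mul_zero, Finset.sum_ite_eq, if_pos hn]
        ring

theorem sum_norm_sq_expSum_toAddCircle {M N : ℕ} [NeZero M] (hN : N ≤ M) (γ : ℕ → ℂ) :
    ∑ k : ZMod M, ‖expSum γ N (ZMod.toAddCircle k)‖ ^ 2 =
      M * ∑ n ∈ Finset.range N, ‖γ n‖ ^ 2 := by
  refine sum_norm_sq_sum_mul_stdAddChar_pow (fun n hn m hm h => ?_) γ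
  have lt_M : ∀ i ∈ (Finset.range N : Set ℕ), i < M := fun i hi =>
    (Finset.mem_range.1 hi).trans_le hN
  exact Nat.ModEq.eq_of_lt_of_lt ((ZMod.natCast_eq_natCast_iff n m M).1 h) (lt_M n hn) (lt_M m hm)

theorem sum_sum_norm_sq_expSum_toAddCircle_le {M N : ℕ} [NeZero M] (hN : N ≤ M) (γ : ℕ → ℂ) :
    ∑ t ∈ Finset.range N, ∑ k : ZMod M, ‖expSum γ (t + 1) (ZMod.toAddCircle k)‖ ^ 2 ≤
      N * (M * ∑ n ∈ Finset.range N, ‖γ n‖ ^ 2) := by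
  rw [← nsmul_eq_mul]
  refine (Finset.sum_le_card_nsmul _ _ _ fun t ht => ?_).trans_eq (by rw [Finset.card_range])
  have ht : t + 1 ≤ N := Finset.mem_range.1 ht
  rw [sum_norm_sq_expSum_toAddCircle (ht.trans hN)]
  gcongr

theorem norm_sum_pow_smul_le {E : Type*} [NormedAddCommGroup E] [NormedSpace ℂ E] {z : ℂ}
    (hz : ‖z‖ = 1) (f : ℕ → E) (N : ℕ) :
    ‖∑ n ∈ Finset.range N, z ^ n • f n‖ ≤ ‖∑ n ∈ Finset.range N, f n‖ +
      ‖z - 1‖ * ∑ t ∈ Finset.range N, ‖∑ n ∈ Finset.range (t + 1), f n‖ := by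
  have norm_diff (t : ℕ) : ‖z ^ (t + 1) - z ^ t‖ = ‖z - 1‖ := by
    rw [pow_succ, ← mul_sub_one, norm_mul, norm_pow, hz, one_pow, one_mul]
  rw [Finset.sum_range_by_parts]
  refine (norm_sub_le _ _).trans (add_le_add ?_ ?_)
  · rw [norm_smul, norm_pow, hz, one_pow, one_mul]
  · refine (norm_sum_le _ _).trans ?_
    simp_rw [norm_smul, norm_diff, ← Finset.mul_sum]
    gcongr
    exact Nat.sub_le N 1

theorem norm_expSum_sq_le (γ : ℕ → ℂ) (N : ℕ) (x y : UnitAddCircle) :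
    ‖expSum γ N x‖ ^ 2 ≤ 2 * ‖expSum γ N y‖ ^ 2 +
      2 * (2 * π * ‖x - y‖) ^ 2 * N * ∑ t ∈ Finset.range N, ‖expSum γ (t + 1) y‖ ^ 2 := by
  have twist : expSum γ N x =
      ∑ n ∈ Finset.range N, ((x - y).toCircle : ℂ) ^ n • (γ n * (y.toCircle : ℂ) ^ n) := by
    refine Finset.sum_congr rfl fun n _ => ?_
    conv_lhs => rw [← sub_add_cancel x y, AddCircle.toCircle_add, Circle.coe_mul, mul_pow]
    rw [smul_eq_mul, mul_left_comm]
  set A := ∑ t ∈ Finset.range N, ‖expSum γ (t + 1) y‖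
  have abel : ‖expSum γ N x‖ ≤ ‖expSum γ N y‖ + 2 * π * ‖x - y‖ * A := by
    rw [twist]
    refine (norm_sum_pow_smul_le (Circle.norm_coe _) _ N).trans (add_le_add le_rfl ?_)
    refine mul_le_mul_of_nonneg_right ?_ (Finset.sum_nonneg fun _ _ => norm_nonneg _)
    exact norm_toCircle_sub_one_le (x - y)
  have cauchy_schwarz : A ^ 2 ≤ N * ∑ t ∈ Finset.range N, ‖expSum γ (t + 1) y‖ ^ 2 := by
    simpa only [Finset.card_range] using sq_sum_le_card_mul_sum_sq (s := Finset.range N)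
      (f := fun t => ‖expSum γ (t + 1) y‖)
  calc ‖expSum γ N x‖ ^ 2
      ≤ (‖expSum γ N y‖ + 2 * π * ‖x - y‖ * A) ^ 2 := by gcongr
    _ ≤ 2 * (‖expSum γ N y‖ ^ 2 + (2 * π * ‖x - y‖ * A) ^ 2) := add_sq_le
    _ = 2 * ‖expSum γ N y‖ ^ 2 + 2 * (2 * π * ‖x - y‖) ^ 2 * A ^ 2 := by ring
    _ ≤ _ := by
        rw [mul_assoc _ (N : ℝ)]
        gcongr

theorem sum_norm_expSum_sq_le_of_injOn {ι : Type*} {J : Finset ι} {x : ι → UnitAddCircle}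
    {M N : ℕ} [NeZero M] (hN : N ≤ M) {k : ι → ZMod M} (hk : Set.InjOn k J)
    (hx : ∀ j ∈ J, ‖x j - ZMod.toAddCircle (k j)‖ ≤ 1 / (2 * M)) (γ : ℕ → ℂ) :
    ∑ j ∈ J, ‖expSum γ N (x j)‖ ^ 2 ≤
      (2 + 2 * π ^ 2) * M * ∑ n ∈ Finset.range N, ‖γ n‖ ^ 2 := by
  classical
  set G := ∑ n ∈ Finset.range N, ‖γ n‖ ^ 2
  set c : ℝ := 2 * (2 * π * (1 / (2 * M))) ^ 2 * N with hc
  set F : ZMod M → ℝ := fun k => 2 * ‖expSum γ N (ZMod.toAddCircle k)‖ ^ 2 +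
    c * ∑ t ∈ Finset.range N, ‖expSum γ (t + 1) (ZMod.toAddCircle k)‖ ^ 2
  have hM : (0 : ℝ) < M := by exact_mod_cast NeZero.pos M
  have hcN : c * N ≤ 2 * π ^ 2 := by
    calc c * N = 2 * π ^ 2 * (N / M : ℝ) ^ 2 := by rw [hc]; field_simp
      _ ≤ 2 * π ^ 2 := by
        refine mul_le_of_le_one_right (by positivity) (pow_le_one₀ (by positivity) ?_)
        exact div_le_one_of_le₀ (by exact_mod_cast hN) hM.le
  calc ∑ j ∈ J, ‖expSum γ N (x j)‖ ^ 2
      ≤ ∑ j ∈ J, F (k j) := Finset.sum_le_sum fun j hj =>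
        (norm_expSum_sq_le γ N (x j) (ZMod.toAddCircle (k j))).trans <| by
          simp only [F, c]
          gcongr
          exact hx j hj
    _ = ∑ k ∈ J.image k, F k := (Finset.sum_image hk).symm
    _ ≤ ∑ k, F k := Finset.sum_le_sum_of_subset_of_nonneg (Finset.subset_univ _)
        fun k _ _ => by positivity
    _ = 2 * (M * G) + c * ∑ t ∈ Finset.range N, ∑ k : ZMod M,
          ‖expSum γ (t + 1) (ZMod.toAddCircle k)‖ ^ 2 := by
        rw [Finset.sum_add_distrib, ← Finset.mul_sum, ← Finset.mul_sum,
          sum_norm_sq_expSum_toAddCircle hN, Finset.sum_comm]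
    _ ≤ 2 * (M * G) + c * (N * (M * G)) := by
        gcongr
        exact sum_sum_norm_sq_expSum_toAddCircle_le hN γ
    _ = 2 * (M * G) + c * N * (M * G) := by ring
    _ ≤ 2 * (M * G) + 2 * π ^ 2 * (M * G) := by gcongr
    _ = (2 + 2 * π ^ 2) * M * G := by ring

theorem large_sieve {ι : Type*} {J : Finset ι} {x : ι → UnitAddCircle} {δ : ℝ} (hδ : 0 < δ)
    (hx : (J : Set ι).Pairwise fun i j => δ ≤ ‖x i - x j‖) (N : ℕ) (γ : ℕ → ℂ) :
    ∑ j ∈ J, ‖expSum γ N (x j)‖ ^ 2 ≤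
      (2 + 2 * π ^ 2) * (N + δ⁻¹ + 1) * ∑ n ∈ Finset.range N, ‖γ n‖ ^ 2 := by
  set M : ℕ := N + (⌊δ⁻¹⌋₊ + 1) with hM
  have hδM : δ⁻¹ < M := by
    rw [hM, Nat.cast_add, Nat.cast_add_one]
    linarith [Nat.lt_floor_add_one δ⁻¹, N.cast_nonneg (α := ℝ)]
  choose k hk using fun j => exists_norm_sub_toAddCircle_le M (x j)
  have k_injOn : Set.InjOn k J := by
    intro i hi j hj hij
    by_contra hne
    refine (hx hi hj hne).not_gt ?_
    calc ‖x i - x j‖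
        = ‖(x i - ZMod.toAddCircle (k i)) - (x j - ZMod.toAddCircle (k j))‖ := by
          rw [hij, sub_sub_sub_cancel_right]
      _ ≤ 1 / (2 * M) + 1 / (2 * M) := (norm_sub_le _ _).trans (add_le_add (hk i) (hk j))
      _ = (M : ℝ)⁻¹ := by ring
      _ < δ := inv_lt_of_inv_lt₀ hδ hδM
  refine (sum_norm_expSum_sq_le_of_injOn (Nat.le_add_right N _) k_injOn (fun j _ => hk j)
    γ).trans ?_
  gcongr
  rw [Nat.cast_add, Nat.cast_add_one, add_assoc]
  gcongr
  exact Nat.floor_le (inv_nonneg.2 hδ.le)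

theorem large_sieve_of_fiberwise {ι κ : Type*} {J : Finset ι}
    {x : ι → UnitAddCircle} {δ : ℝ} (hδ : 0 < δ) {L : Finset κ} {c : ι → κ}
    (hc : ∀ j ∈ J, c j ∈ L)
    (hx : (J : Set ι).Pairwise fun i j => c i = c j → δ ≤ ‖x i - x j‖) (N : ℕ) (γ : ℕ → ℂ) :
    ∑ j ∈ J, ‖expSum γ N (x j)‖ ^ 2 ≤
      L.card * ((2 + 2 * π ^ 2) * (N + δ⁻¹ + 1) * ∑ n ∈ Finset.range N, ‖γ n‖ ^ 2) := by
  classical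
  rw [← Finset.sum_fiberwise_of_maps_to hc, ← nsmul_eq_mul]
  refine Finset.sum_le_card_nsmul _ _ _ fun l _ => large_sieve hδ ?_ N γ
  intro i hi j hj hij
  rw [Finset.mem_coe, Finset.mem_filter] at hi hj
  exact hx hi.1 hj.1 hij (hi.2.trans hj.2.symm)

end LargeSieve

section ReducedRepresentation

variable {q D d d' : ℕ} {ν ν' r s r' s' a a' : ℤ}

theorem exists_sq_lt_and_sq_le_and_dvd_mul_sub (hd : 0 < d) (ν : ℤ) :
    ∃ x y : ℤ, 0 < y ∧ x ^ 2 < d ∧ y ^ 2 ≤ d ∧ (d : ℤ) ∣ ν * y - x := by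
  obtain ⟨j, y, hy, hyd, hj⟩ := Real.exists_int_int_abs_mul_sub_le (ν / d) (Nat.sqrt_pos.2 hd)
  refine ⟨ν * y - d * j, y, hy, ?_, ?_, j, by ring⟩
  · have hdR : (0 : ℝ) < d := by exact_mod_cast hd
    have hsqrt : (d : ℝ) < (d.sqrt + 1) ^ 2 := by
      exact_mod_cast (Nat.lt_succ_sqrt d).trans_eq (sq _).symm
    have hx : |(ν * y - d * j : ℝ)| ≤ d / (d.sqrt + 1) := by
      calc |(ν * y - d * j : ℝ)| = d * |y * (ν / d : ℝ) - j| := by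
            rw [← abs_of_pos hdR, ← abs_mul, abs_of_pos hdR]
            congr 1
            field_simp
        _ ≤ d * (1 / (d.sqrt + 1)) := by gcongr
        _ = d / (d.sqrt + 1) := mul_one_div _ _
    have : (ν * y - d * j : ℝ) ^ 2 < d := by
      calc (ν * y - d * j : ℝ) ^ 2 ≤ (d / (d.sqrt + 1)) ^ 2 :=
            sq_le_sq.2 (hx.trans (le_abs_self _))
        _ < d := by
            rw [div_pow, div_lt_iff₀ (by positivity), sq (d : ℝ)]
            gcongr
    exact_mod_cast this
  · calc (y : ℤ) ^ 2 ≤ (d.sqrt : ℤ) ^ 2 := by gcongr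
      _ ≤ (d : ℤ) := by exact_mod_cast d.sqrt_le'

theorem exists_sq_add_sq_eq_and_dvd_mul_sub (hd : 0 < d) (hν : (d : ℤ) ∣ ν ^ 2 + 1) :
    ∃ x y : ℤ, x ^ 2 + y ^ 2 = d ∧ (d : ℤ) ∣ ν * y - x := by
  obtain ⟨x, y, hy, hxd, hyd, hdvd⟩ := exists_sq_lt_and_sq_le_and_dvd_mul_sub hd ν
  refine ⟨x, y, ?_, hdvd⟩
  have hsum : (d : ℤ) ∣ x ^ 2 + y ^ 2 := by
    have h := (hν.mul_right (y ^ 2)).sub (hdvd.mul_right (ν * y + x))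
    ring_nf at h ⊢
    exact h
  have hpos : 0 < x ^ 2 + y ^ 2 := by positivity
  obtain ⟨c, hc⟩ := hsum
  have hc_pos : 0 < c := by
    rw [hc] at hpos
    exact pos_of_mul_pos_right hpos d.cast_nonneg
  have hc_lt : c < 2 := by
    refine lt_of_mul_lt_mul_left (a := (d : ℤ)) ?_ d.cast_nonneg
    linarith
  obtain rfl : c = 1 := by omega
  rw [hc, mul_one]

theorem isCoprime_of_sq_add_sq_eq (hd : 0 < d) (hν : (d : ℤ) ∣ ν ^ 2 + 1)
    (hsum : r ^ 2 + s ^ 2 = d) (hdvd : (d : ℤ) ∣ ν * s - r) : IsCoprime r s := by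
  obtain ⟨t, ht⟩ := hdvd
  obtain ⟨w, hw⟩ := hν
  refine ⟨-t, s * w - ν * t, mul_left_cancel₀ (Nat.cast_ne_zero.2 hd.ne' : (d : ℤ) ≠ 0) ?_⟩
  linear_combination hsum + (r + ν * s) * ht - s ^ 2 * hw

/-- A reduced representation of the root `ν` of `X² + 1` modulo `d`: coprime integers `r`, `s`
with `|r| ≤ s`, `r² + s² = d` and `r ≡ ν s (mod d)`. By Gauss, each root has one, and it determines
the root. -/
structure IsReducedRep (d : ℕ) (ν r s : ℤ) : Prop where
  pos : 0 < s
  abs_le_snd : |r| ≤ s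
  sq_add_sq : r ^ 2 + s ^ 2 = d
  isCoprime : IsCoprime r s
  dvd_mul_sub : (d : ℤ) ∣ ν * s - r

/-- The index `k` of the cell `[k / (4D), (k + 1) / (4D))` that contains `r / (s d)`. Roots are
sorted by this index, since those sharing a cell are well spaced modulo one. -/
noncomputable def slopeCell (D d : ℕ) (r s : ℤ) : ℤ :=
  ⌊4 * D * (r / (s * d) : ℝ)⌋

namespace IsReducedRep

theorem of_abs_le (hsum : r ^ 2 + s ^ 2 = d) (hcop : IsCoprime r s)
    (hdvd : (d : ℤ) ∣ ν * s - r) (hrs : |r| ≤ |s|) : ∃ r s, IsReducedRep d ν r s := by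
  have hs : s ≠ 0 := by
    rintro rfl
    obtain rfl : r = 0 := abs_nonpos_iff.1 (hrs.trans_eq abs_zero)
    exact not_isCoprime_zero_zero hcop
  rcases hs.lt_or_gt with hs | hs
  · refine ⟨-r, -s, by omega, ?_, by rwa [neg_sq, neg_sq], hcop.neg_neg, ?_⟩
    · rwa [abs_neg, ← abs_of_neg hs]
    · rw [show ν * -s - -r = -(ν * s - r) by ring]
      exact hdvd.neg_right
  · exact ⟨r, s, hs, by rwa [abs_of_pos hs] at hrs, hsum, hcop, hdvd⟩

theorem exists_of_dvd_sq_add_one (hd : 0 < d) (hν : (d : ℤ) ∣ ν ^ 2 + 1) :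
    ∃ r s, IsReducedRep d ν r s := by
  obtain ⟨x, y, hsum, hdvd⟩ := exists_sq_add_sq_eq_and_dvd_mul_sub hd hν
  have hcop := isCoprime_of_sq_add_sq_eq hd hν hsum hdvd
  rcases le_total |x| |y| with hxy | hyx
  · exact of_abs_le hsum hcop hdvd hxy
  · -- Multiplication by `i` turns the representation `(x, y)` of `ν` into `(-y, x)`.
    refine of_abs_le (r := -y) (s := x) (by rw [← hsum]; ring) hcop.symm.neg_left ?_
      (by rwa [abs_neg])
    rw [show ν * x - -y = (ν ^ 2 + 1) * y - ν * (ν * y - x) by ring]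
    exact (hν.mul_right y).sub (hdvd.mul_left ν)

theorem modulus_pos (h : IsReducedRep d ν r s) : 0 < d := by
  have hs := h.pos
  exact_mod_cast (by positivity : 0 < r ^ 2 + s ^ 2).trans_eq h.sq_add_sq

theorem modulus_dvd_sub (h : IsReducedRep d ν r s) (h' : IsReducedRep d ν' r s) :
    (d : ℤ) ∣ ν - ν' := by
  have hcop : IsCoprime (d : ℤ) s := by
    rw [← h.sq_add_sq, sq s]
    exact (h.isCoprime.pow_left (m := 2)).add_mul_right_left s
  refine hcop.dvd_of_dvd_mul_right ?_
  simpa only [sub_sub_sub_cancel_right, ← sub_mul] using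
    dvd_sub h.dvd_mul_sub h'.dvd_mul_sub

/-- The relation `ν / d ≡ r / (s d) - r⁻¹ / s (mod 1)` that replaces the denominator `d ~ D` by
`s ≪ √D`, twisted by `q`: the class `m` is `-r⁻¹` modulo `s`. -/
theorem exists_div_eq (h : IsReducedRep d ν r s) (hq : 0 < q) (ha : (d : ℤ) ∣ q * a - ν) :
    ∃ m : ℤ, s ∣ 1 + r * m ∧ (a / d : ℝ) = r / (s * d) / q + m / (q * s) := by
  obtain ⟨m, hm⟩ : (d : ℤ) ∣ q * s * a - r := by
    rw [show q * s * a - r = s * (q * a - ν) + (ν * s - r) by ring]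
    exact (ha.mul_left s).add h.dvd_mul_sub
  refine ⟨m, h.isCoprime.symm.dvd_of_dvd_mul_left ⟨q * a - s * m, ?_⟩, ?_⟩
  · linear_combination -hm + m * h.sq_add_sq
  · have hs : (s : ℝ) ≠ 0 := by exact_mod_cast h.pos.ne'
    have hd : (d : ℝ) ≠ 0 := by exact_mod_cast h.modulus_pos.ne'
    have hmR : (q * s * a - r : ℝ) = d * m := by exact_mod_cast hm
    field_simp
    linear_combination hmR

theorem sq_le (h : IsReducedRep d ν r s) : s ^ 2 ≤ d :=
  h.sq_add_sq ▸ le_add_of_nonneg_left (sq_nonneg r)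

theorem mul_le (h : IsReducedRep d ν r s) (h' : IsReducedRep d' ν' r' s') (hd : d ≤ 2 * D)
    (hd' : d' ≤ 2 * D) : s * s' ≤ 2 * D := by
  have hdZ : (d : ℤ) ≤ 2 * D := by exact_mod_cast hd
  have hdZ' : (d' : ℤ) ≤ 2 * D := by exact_mod_cast hd'
  linarith [two_mul_le_add_sq s s', h.sq_le, h'.sq_le, hdZ, hdZ']

theorem ne_zero (h : IsReducedRep d ν r s) (hd : 1 < d) : r ≠ 0 := by
  rintro rfl
  have hs : s = 1 := Int.isUnit_eq_one_or (isCoprime_zero_left.1 h.isCoprime) |>.resolve_right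
    (by have := h.pos; omega)
  have := h.sq_add_sq
  rw [hs] at this
  omega

theorem slopeCell_mem (h : IsReducedRep d ν r s) (hd : D ≤ d) :
    slopeCell D d r s ∈ Finset.Icc (-4) 4 := by
  have hs : (0 : ℝ) < s := by exact_mod_cast h.pos
  have hdpos : (0 : ℝ) < d := by exact_mod_cast h.modulus_pos
  have bound : |4 * D * (r / (s * d) : ℝ)| ≤ 4 := by
    calc |4 * D * (r / (s * d) : ℝ)| = 4 * (D / d) * (|(r : ℝ)| / s) := by
          rw [abs_mul, abs_div, abs_of_pos (mul_pos hs hdpos), abs_of_nonneg (by positivity)]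
          field_simp
      _ ≤ 4 * 1 * 1 := by
          gcongr
          · exact div_le_one_of_le₀ (by exact_mod_cast hd) hdpos.le
          · exact div_le_one_of_le₀ (by exact_mod_cast h.abs_le_snd) hs.le
      _ = 4 := by norm_num
  obtain ⟨hlow, hupp⟩ := abs_le.1 bound
  exact Finset.mem_Icc.2
    ⟨Int.le_floor.2 (by exact_mod_cast hlow), Int.floor_le_iff.2 (by push_cast; linarith)⟩

theorem slopeCell_nonneg_iff (h : IsReducedRep d ν r s) (hD : 0 < D) :
    0 ≤ slopeCell D d r s ↔ 0 ≤ r := by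
  have hs : (0 : ℝ) < s := by exact_mod_cast h.pos
  have hd : (0 : ℝ) < d := by exact_mod_cast h.modulus_pos
  rw [slopeCell, Int.floor_nonneg, mul_nonneg_iff_of_pos_left (by positivity),
    le_div_iff₀ (by positivity), zero_mul, Int.cast_nonneg_iff]

theorem eq_of_slopeCell_eq (h : IsReducedRep d ν r s) (h' : IsReducedRep d' ν' r' s)
    (hD : 0 < D) (hd : D < d) (hd' : D < d')
    (hcell : slopeCell D d r s = slopeCell D d' r' s) (hdvd : s ∣ r - r') : r = r' := by
  have sign_iff : 0 ≤ r ↔ 0 ≤ r' := by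
    rw [← h.slopeCell_nonneg_iff hD, hcell, h'.slopeCell_nonneg_iff hD]
  have hr := abs_le.1 h.abs_le_snd
  have hr' := abs_le.1 h'.abs_le_snd
  have hr0 := h.ne_zero (by omega)
  have hr0' := h'.ne_zero (by omega)
  -- Nonzero integers of equal sign and absolute value at most `s` differ by less than `s`.
  exact sub_eq_zero.1 (Int.eq_zero_of_abs_lt_dvd hdvd (abs_lt.2 (by omega)))

end IsReducedRep

theorem abs_sub_lt_of_slopeCell_eq (hD : 0 < D) (h : slopeCell D d r s = slopeCell D d' r' s') :
    |(r / (s * d) - r' / (s' * d') : ℝ)| < 1 / (4 * D) := by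
  have hlt := Int.abs_sub_lt_one_of_floor_eq_floor h
  rwa [← mul_sub, abs_mul, abs_of_pos (by positivity), ← lt_div_iff₀' (by positivity)] at hlt

theorem eq_and_dvd_sub_of_abs_sub_lt {z m m' : ℤ} (hq : 0 < q) (hs : 0 < s) (hs' : 0 < s')
    (hm : s ∣ 1 + r * m) (hm' : s' ∣ 1 + r' * m')
    (h : |(m / (q * s) - m' / (q * s') - z : ℝ)| < 1 / (q * (s * s'))) :
    s = s' ∧ s ∣ r - r' := by
  have isCoprime_of_dvd : ∀ {s r m : ℤ}, s ∣ 1 + r * m → IsCoprime s m := by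
    rintro s r m ⟨c, hc⟩
    exact ⟨c, -r, by linear_combination -hc⟩
  have hzero : m * s' - m' * s - z * (q * s * s') = 0 := by
    rw [← Int.abs_lt_one_iff, ← Int.cast_lt (R := ℝ)]
    have hsR : (0 : ℝ) < s := by exact_mod_cast hs
    have hsR' : (0 : ℝ) < s' := by exact_mod_cast hs'
    have hqR : (0 : ℝ) < q := by exact_mod_cast hq
    have hpos : (0 : ℝ) < q * (s * s') := by positivity
    calc ((|m * s' - m' * s - z * (q * s * s')| : ℤ) : ℝ)
        = |q * (s * s') * (m / (q * s) - m' / (q * s') - z : ℝ)| := by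
          push_cast
          congr 1
          field_simp
      _ = q * (s * s') * |(m / (q * s) - m' / (q * s') - z : ℝ)| := by
          rw [abs_mul, abs_of_pos hpos]
      _ < 1 := by rwa [lt_div_iff₀' hpos] at h
      _ = (1 : ℤ) := Int.cast_one.symm
  obtain rfl : s = s' := by
    refine Int.dvd_antisymm hs.le hs'.le ?_ ?_
    · exact (isCoprime_of_dvd hm).dvd_of_dvd_mul_left
        ⟨m' + z * q * s', by linear_combination hzero⟩
    · exact (isCoprime_of_dvd hm').dvd_of_dvd_mul_left
        ⟨m - z * q * s, by linear_combination -hzero⟩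
  refine ⟨rfl, (isCoprime_of_dvd hm).dvd_of_dvd_mul_left ?_⟩
  have hmm : m - m' = z * q * s :=
    mul_left_cancel₀ hs.ne' (by linear_combination hzero)
  rw [show m * (r - r') = (1 + r * m) - (1 + r' * m') - s * (r' * (z * q)) by
    linear_combination -r' * hmm]
  exact (hm.sub hm').sub (dvd_mul_right _ _)

theorem IsReducedRep.eq_of_norm_sub_lt (hq : 0 < q) (hD : 0 < D) (hd : d ∈ Finset.Ioc D (2 * D))
    (hd' : d' ∈ Finset.Ioc D (2 * D)) (h : IsReducedRep d ν r s) (h' : IsReducedRep d' ν' r' s')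
    (ha : (d : ℤ) ∣ q * a - ν) (ha' : (d' : ℤ) ∣ q * a' - ν')
    (hcell : slopeCell D d r s = slopeCell D d' r' s')
    (hlt : ‖((a / d : ℝ) : UnitAddCircle) - (a' / d' : ℝ)‖ < 1 / (4 * q * D)) :
    r = r' ∧ s = s' := by
  rw [Finset.mem_Ioc] at hd hd'
  have hs := h.pos
  have hs' := h'.pos
  obtain ⟨m, hm, hma⟩ := h.exists_div_eq hq ha
  obtain ⟨m', hm', hma'⟩ := h'.exists_div_eq hq ha'
  rw [← AddCircle.coe_sub, UnitAddCircle.norm_eq] at hlt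
  set z := round (a / d - a' / d' : ℝ)
  have slopes_close : |(r / (s * d) / q - r' / (s' * d') / q : ℝ)| < 1 / (4 * q * D) := by
    rw [← sub_div, abs_div, Nat.abs_cast, div_lt_iff₀ (by positivity)]
    refine (abs_sub_lt_of_slopeCell_eq hD hcell).trans_eq ?_
    field_simp
  have dual_close : |(m / (q * s) - m' / (q * s') - z : ℝ)| < 1 / (q * (s * s')) := by
    calc |(m / (q * s) - m' / (q * s') - z : ℝ)|
        = |(a / d - a' / d' - z : ℝ) - (r / (s * d) / q - r' / (s' * d') / q)| := by
          rw [hma, hma']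
          congr 1
          ring
      _ < 1 / (4 * q * D) + 1 / (4 * q * D) :=
          (abs_sub _ _).trans_lt (add_lt_add hlt slopes_close)
      _ = 1 / (q * (2 * D)) := by ring
      _ ≤ 1 / (q * (s * s')) := by
          have : (s * s' : ℝ) ≤ 2 * D := by exact_mod_cast h.mul_le h' hd.2 hd'.2
          gcongr _ / (_ * ?_)
  obtain ⟨rfl, hdvd⟩ := eq_and_dvd_sub_of_abs_sub_lt hq hs hs' hm hm' dual_close
  exact ⟨h.eq_of_slopeCell_eq h' hD hd.1 hd'.1 hcell hdvd, rfl⟩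

theorem pairwise_le_norm_sub_of_slopeCell_eq {ι : Type*} {J : Set ι} {d : ι → ℕ} {ν a r s : ι → ℤ}
    (hq : 0 < q) (hD : 0 < D) (hd : ∀ j ∈ J, d j ∈ Finset.Ioc D (2 * D))
    (hrep : ∀ j ∈ J, IsReducedRep (d j) (ν j) (r j) (s j))
    (ha : ∀ j ∈ J, (d j : ℤ) ∣ q * a j - ν j)
    (hJ : J.Pairwise fun i j => d i = d j → ¬ (d i : ℤ) ∣ ν i - ν j) :
    J.Pairwise fun i j => slopeCell D (d i) (r i) (s i) = slopeCell D (d j) (r j) (s j) →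
      1 / (4 * q * D) ≤ ‖((a i / d i : ℝ) : UnitAddCircle) - (a j / d j : ℝ)‖ := by
  intro i hi j hj hij hcell
  by_contra! hlt
  obtain ⟨hr, hs⟩ := (hrep i hi).eq_of_norm_sub_lt hq hD (hd i hi) (hd j hj) (hrep j hj)
    (ha i hi) (ha j hj) hcell hlt
  have hdd : d i = d j := by
    have hsum := (hrep i hi).sq_add_sq
    rw [hr, hs, (hrep j hj).sq_add_sq] at hsum
    exact_mod_cast hsum.symm
  refine hJ hi hj hij hdd ((hrep i hi).modulus_dvd_sub ?_)
  rw [hr, hs, hdd]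
  exact hrep j hj

theorem large_sieve_roots_sq_add_one {ι : Type*} {J : Finset ι} {d : ι → ℕ} {ν a : ι → ℤ}
    (hq : 0 < q) (hD : 0 < D) (hd : ∀ j ∈ J, d j ∈ Finset.Ioc D (2 * D))
    (hν : ∀ j ∈ J, (d j : ℤ) ∣ ν j ^ 2 + 1) (ha : ∀ j ∈ J, (d j : ℤ) ∣ q * a j - ν j)
    (hJ : (J : Set ι).Pairwise fun i j => d i = d j → ¬ (d i : ℤ) ∣ ν i - ν j)
    (N : ℕ) (γ : ℕ → ℂ) :
    ∑ j ∈ J, ‖expSum γ N ((a j / d j : ℝ) : UnitAddCircle)‖ ^ 2 ≤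
      9 * ((2 + 2 * π ^ 2) * (N + 4 * q * D + 1) * ∑ n ∈ Finset.range N, ‖γ n‖ ^ 2) := by
  have hrep : ∀ j ∈ J, ∃ r s, IsReducedRep (d j) (ν j) r s := fun j hj =>
    IsReducedRep.exists_of_dvd_sq_add_one (Nat.zero_lt_of_lt (Finset.mem_Ioc.1 (hd j hj)).1)
      (hν j hj)
  choose! r s hrep using hrep
  have hsieve := large_sieve_of_fiberwise (x := fun j => ((a j / d j : ℝ) : UnitAddCircle))
    (by positivity) (fun j hj => (hrep j hj).slopeCell_mem (Finset.mem_Ioc.1 (hd j hj)).1.le)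
    (pairwise_le_norm_sub_of_slopeCell_eq hq hD hd hrep ha hJ) N γ
  rwa [one_div, inv_inv] at hsieve

end ReducedRepresentation

theorem sum_range_add_one_eq_sum_Icc {E : Type*} [AddCommMonoid E] (f : ℕ → E) (N : ℕ) :
    ∑ n ∈ Finset.range N, f (n + 1) = ∑ n ∈ Finset.Icc 1 N, f n := by
  rw [Finset.range_eq_Ico, Finset.sum_Ico_add', zero_add, Finset.Ico_add_one_right_eq_Icc]

theorem norm_sum_Icc_mul_exp_eq (γ : ℕ → ℂ) (N : ℕ) (x : ℝ) :
    ‖∑ n ∈ Finset.Icc 1 N, γ n * Complex.exp (2 * π * Complex.I * (n * x))‖ =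
      ‖expSum (fun n => γ (n + 1)) N (x : UnitAddCircle)‖ := by
  set z := AddCircle.toCircle (x : UnitAddCircle) with hz
  have exp_eq (n : ℕ) : Complex.exp (2 * π * Complex.I * (n * x)) = (z : ℂ) ^ n := by
    rw [hz, AddCircle.toCircle_apply_mk, Circle.coe_exp, ← Complex.exp_nat_mul]
    congr 1
    push_cast
    ring
  have shift : ∑ n ∈ Finset.Icc 1 N, γ n * (z : ℂ) ^ n =
      z * expSum (fun n => γ (n + 1)) N (x : UnitAddCircle) := by
    rw [← sum_range_add_one_eq_sum_Icc, expSum, Finset.mul_sum]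
    exact Finset.sum_congr rfl fun n _ => by rw [pow_succ]; ring
  simp_rw [exp_eq]
  rw [shift, norm_mul, Circle.norm_coe, one_mul]

theorem norm_sum_Icc_mul_exp_div_eq (γ : ℕ → ℂ) (N ν b d : ℕ) :
    ‖∑ n ∈ Finset.Icc 1 N, γ n *
        Complex.exp (2 * π * Complex.I * ((ν * n * b : ℕ) : ℂ) / (d : ℂ))‖ =
      ‖expSum (fun n => γ (n + 1)) N ((ν * b / d : ℝ) : UnitAddCircle)‖ := by
  rw [← norm_sum_Icc_mul_exp_eq]
  congr! 4
  push_cast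
  ring

theorem dvd_mul_mul_val_inv_sub {d q : ℕ} [NeZero d] (hdq : d.Coprime q) (ν : ℤ) :
    (d : ℤ) ∣ q * (ν * ((q : ZMod d)⁻¹).val) - ν := by
  rw [← ZMod.intCast_zmod_eq_zero_iff_dvd]
  push_cast
  rw [ZMod.natCast_zmod_val, mul_left_comm, ZMod.coe_mul_inv_eq_one q hdq.symm, mul_one, sub_self]

theorem sum_norm_expSum_mul_val_inv_sq_le {q D : ℕ} (hq : 0 < q) (hD : 0 < D) (N : ℕ)
    (γ : ℕ → ℂ) :
    ∑ d ∈ (Finset.Ioc D (2 * D)).filter (fun d => Nat.Coprime d q),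
      ∑ ν ∈ (Finset.range d).filter (fun ν => (ν ^ 2 + 1) % d = 0),
        ‖expSum γ N ((ν * (q : ZMod d)⁻¹.val / d : ℝ) : UnitAddCircle)‖ ^ 2 ≤
      9 * ((2 + 2 * π ^ 2) * (N + 4 * q * D + 1) * ∑ n ∈ Finset.range N, ‖γ n‖ ^ 2) := by
  rw [Finset.sum_sigma']
  set J := ((Finset.Ioc D (2 * D)).filter (fun d => Nat.Coprime d q)).sigma fun d =>
    (Finset.range d).filter (fun ν => (ν ^ 2 + 1) % d = 0)
  have hJ : ∀ j ∈ J, (j.1 ∈ Finset.Ioc D (2 * D) ∧ j.1.Coprime q) ∧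
      j.2 < j.1 ∧ (j.2 ^ 2 + 1) % j.1 = 0 := fun j hj => by
    simpa only [J, Finset.mem_sigma, Finset.mem_filter, Finset.mem_range] using hj
  have hinv : ∀ j ∈ J, (j.1 : ℤ) ∣ q * (j.2 * (q : ZMod j.1)⁻¹.val) - j.2 := fun j hj => by
    have : NeZero j.1 := ⟨(Nat.zero_lt_of_lt (hJ j hj).2.1).ne'⟩
    exact dvd_mul_mul_val_inv_sub (hJ j hj).1.2 _
  have distinct : (J : Set (Σ _ : ℕ, ℕ)).Pairwise fun i j =>
      i.1 = j.1 → ¬ (i.1 : ℤ) ∣ i.2 - j.2 := by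
    rintro ⟨d, ν⟩ hi ⟨_, ν'⟩ hj hij rfl hdvd
    have hν : ν < d := (hJ _ hi).2.1
    have hν' : ν' < d := (hJ _ hj).2.1
    have hlt : |(ν - ν' : ℤ)| < d := abs_lt.2 (by omega)
    have hsub : (ν - ν' : ℤ) = 0 := Int.eq_zero_of_abs_lt_dvd hdvd hlt
    obtain rfl : ν = ν' := by omega
    exact hij rfl
  have hsieve := large_sieve_roots_sq_add_one hq hD (fun j hj => (hJ j hj).1.1)
    (fun j hj => by exact_mod_cast Nat.dvd_of_mod_eq_zero (hJ j hj).2.2) hinv distinct N γ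
  simpa only [Int.cast_mul, Int.cast_natCast] using hsieve

/-- Large sieve for roots of the quadratic congruence `ν² + 1 ≡ 0 (mod d)`, twisted by
the inverse of `q` mod `d`: for `q, D, N ≥ 1` and complex numbers `γ_n`,
`∑_{D < d ≤ 2D, (d,q)=1} ∑_{ν² + 1 ≡ 0 (d)} |∑_{n ≤ N} γ_n e_d(ν n q̄)|²
  ≪ (qD + N) ∑_{n ≤ N} |γ_n|²`, with an absolute implied constant. -/
theorem stmt_10 :
    ∃ C : ℝ, 0 < C ∧ ∀ (q D N : ℕ), 1 ≤ q → 1 ≤ D → 1 ≤ N → ∀ γ : ℕ → ℂ,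
      ∑ d ∈ (Finset.Ioc D (2 * D)).filter (fun d => Nat.Coprime d q),
        ∑ ν ∈ (Finset.range d).filter (fun ν => (ν ^ 2 + 1) % d = 0),
          ‖∑ n ∈ Finset.Icc 1 N, γ n *
              Complex.exp (2 * π * Complex.I *
                ((ν * n * (ZMod.val ((q : ZMod d)⁻¹)) : ℕ) : ℂ) / (d : ℂ))‖ ^ 2 ≤
        C * ((q * D : ℕ) + N) * ∑ n ∈ Finset.Icc 1 N, ‖γ n‖ ^ 2 := by
  refine ⟨36 * (2 + 2 * π ^ 2), by positivity, fun q D N hq hD hN γ => ?_⟩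
  have length_le : (N + 4 * q * D + 1 : ℝ) ≤ 4 * ((q * D : ℕ) + N) := by
    have : (1 : ℝ) ≤ N := by exact_mod_cast hN
    push_cast
    linarith
  simp_rw [norm_sum_Icc_mul_exp_div_eq]
  calc _ ≤ 9 * ((2 + 2 * π ^ 2) * (N + 4 * q * D + 1) *
        ∑ n ∈ Finset.range N, ‖γ (n + 1)‖ ^ 2) := sum_norm_expSum_mul_val_inv_sq_le hq hD N _
    _ ≤ 9 * ((2 + 2 * π ^ 2) * (4 * ((q * D : ℕ) + N)) *
        ∑ n ∈ Finset.range N, ‖γ (n + 1)‖ ^ 2) := by gcongr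
    _ = _ := by
        rw [sum_range_add_one_eq_sum_Icc fun n => ‖γ n‖ ^ 2]
        ring
end

section
/- Let D, N ≥ 1 and let γ_n (1 ≤ n ≤ N) be complex numbers. Then ∑_{d ≤ D} (d/φ(d)) ∑*_{χ mod d} |∑_{n ≤ N} γ_n χ(n)|² ≪ (D² + N) ∑_{n ≤ N} |γ_n|², where ∑* denotes summation over primitive Dirichlet characters modulo d. -/
open scoped Classical

/-!
The Gauss sum `τ(χ⁻¹)` of a primitive character mod `d` has modulus `√d` and satisfies
`τ(χ⁻¹) ∑ γ_n χ(n) = ∑_{a mod d} χ⁻¹(a) ∑ γ_n e(an/d)`, so extending the sum over primitive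
characters to all characters and using their orthogonality bounds the `d`-th term of the left side
by `∑_{(a, d) = 1} |∑ γ_n e(an/d)|²`. The fractions `a/d` with `(a, d) = 1` and `d ≤ D` are
`D⁻²`-separated modulo `1`, which reduces the theorem to the additive large sieve
`∑_u |∑_{n ≤ N} γ_n e(nu)|² ≪ (δ⁻¹ + N) ∑ |γ_n|²` over `δ`-separated points `u`.

For the additive inequality, average over `M` translates of the coefficient sequence, where
`M ≍ N + δ⁻¹`. This turns the exponential sums into inner products with vectors `v_u` such that
`⟨v_u, v_w⟩ = |K(w - u)|²` for the Dirichlet kernel `K` of length `2M`. Bombieri's form of Bessel's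
inequality bounds the sum of their squares by `max_u ∑_w |K(w - u)|²`, and this is `O(M²)` because
`|K(t)| ≤ min (2M) (1 / (2‖t‖))` and the points are `δ`-separated.
-/

namespace LargeSieve

open Finset
open scoped ComplexConjugate InnerProductSpace Real

section GeneralizedBessel

/-- Schur's test. -/
theorem sum_sum_mul_mul_le_of_symm {ι : Type*} {s : Finset ι} {K : ι → ι → ℝ} {R : ℝ}
    (hK : ∀ i j, 0 ≤ K i j) (hsymm : ∀ i j, K i j = K j i) (hR : ∀ i ∈ s, ∑ j ∈ s, K i j ≤ R)
    (a : ι → ℝ) : ∑ i ∈ s, ∑ j ∈ s, a i * a j * K i j ≤ R * ∑ i ∈ s, a i ^ 2 := by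
  have hdiag : ∑ i ∈ s, ∑ j ∈ s, a i ^ 2 * K i j ≤ R * ∑ i ∈ s, a i ^ 2 := by
    rw [mul_comm, sum_mul]
    refine sum_le_sum fun i hi => ?_
    rw [← mul_sum]
    exact mul_le_mul_of_nonneg_left (hR i hi) (sq_nonneg _)
  have hswap : ∑ i ∈ s, ∑ j ∈ s, a j ^ 2 * K i j = ∑ i ∈ s, ∑ j ∈ s, a i ^ 2 * K i j := by
    rw [sum_comm]
    simp only [hsymm]
  calc ∑ i ∈ s, ∑ j ∈ s, a i * a j * K i j
      ≤ ∑ i ∈ s, ∑ j ∈ s, (a i ^ 2 * K i j + a j ^ 2 * K i j) / 2 :=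
        sum_le_sum fun i _ => sum_le_sum fun j _ => by
          nlinarith [mul_nonneg (sq_nonneg (a i - a j)) (hK i j)]
    _ = ∑ i ∈ s, ∑ j ∈ s, a i ^ 2 * K i j := by
        simp only [← sum_div, sum_add_distrib, hswap]
        ring
    _ ≤ R * ∑ i ∈ s, a i ^ 2 := hdiag

variable {𝕜 E ι : Type*} [RCLike 𝕜] [SeminormedAddCommGroup E] [InnerProductSpace 𝕜 E]
  {s : Finset ι} {v : ι → E} {R : ℝ}

theorem norm_sum_smul_sq_le (hR : ∀ i ∈ s, ∑ j ∈ s, ‖⟪v i, v j⟫_𝕜‖ ≤ R) (c : ι → 𝕜) :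
    ‖∑ i ∈ s, c i • v i‖ ^ 2 ≤ R * ∑ i ∈ s, ‖c i‖ ^ 2 :=
  calc ‖∑ i ∈ s, c i • v i‖ ^ 2
      = ‖⟪∑ i ∈ s, c i • v i, ∑ j ∈ s, c j • v j⟫_𝕜‖ := by
        rw [inner_self_eq_norm_sq_to_K, norm_pow, RCLike.norm_ofReal, abs_norm]
    _ ≤ ∑ i ∈ s, ∑ j ∈ s, ‖c i‖ * ‖c j‖ * ‖⟪v i, v j⟫_𝕜‖ := by
        rw [sum_inner]
        refine norm_sum_le_of_le _ fun i _ => ?_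
        rw [inner_sum]
        refine norm_sum_le_of_le _ fun j _ => ?_
        rw [inner_smul_left, inner_smul_right, norm_mul, norm_mul, RCLike.norm_conj, mul_assoc]
    _ ≤ R * ∑ i ∈ s, ‖c i‖ ^ 2 :=
        sum_sum_mul_mul_le_of_symm (fun _ _ => norm_nonneg _) (fun i j => norm_inner_symm _ _) hR _

/-- Bombieri's generalization of Bessel's inequality, proved by duality. -/
theorem sum_norm_inner_sq_le (hR0 : 0 ≤ R) (hR : ∀ i ∈ s, ∑ j ∈ s, ‖⟪v i, v j⟫_𝕜‖ ≤ R)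
    (x : E) : ∑ i ∈ s, ‖⟪v i, x⟫_𝕜‖ ^ 2 ≤ R * ‖x‖ ^ 2 := by
  set X := ∑ i ∈ s, ‖⟪v i, x⟫_𝕜‖ ^ 2 with hX
  set w := ∑ i ∈ s, ⟪v i, x⟫_𝕜 • v i with hw
  have hXw : (X : 𝕜) = ⟪w, x⟫_𝕜 := by
    simp only [hX, hw, sum_inner, inner_smul_left, RCLike.conj_mul, map_sum, map_pow]
  have hX0 : 0 ≤ X := by positivity
  have hle : X ≤ ‖w‖ * ‖x‖ := by
    rw [← RCLike.norm_of_nonneg (K := 𝕜) hX0, hXw]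
    exact norm_inner_le_norm w x
  have hsq : X * X ≤ R * ‖x‖ ^ 2 * X :=
    calc X * X ≤ (‖w‖ * ‖x‖) * (‖w‖ * ‖x‖) := mul_self_le_mul_self hX0 hle
      _ = ‖w‖ ^ 2 * ‖x‖ ^ 2 := by ring
      _ ≤ (R * X) * ‖x‖ ^ 2 := by gcongr; exact norm_sum_smul_sq_le hR _
      _ = R * ‖x‖ ^ 2 * X := by ring
  rcases hX0.eq_or_lt with h0 | hpos
  · rw [← h0]
    positivity
  · exact le_of_mul_le_mul_right hsq hpos

end GeneralizedBessel

section Packing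

theorem exists_coe_eq_abs_eq_norm {p : ℝ} (u : AddCircle p) :
    ∃ t : ℝ, (t : AddCircle p) = u ∧ |t| = ‖u‖ := by
  obtain ⟨t, rfl⟩ := QuotientAddGroup.mk_surjective u
  refine ⟨t - round (p⁻¹ * t) * p, ?_, (AddCircle.norm_eq p).symm⟩
  rw [← zsmul_eq_mul, AddCircle.coe_sub, AddCircle.coe_zsmul, AddCircle.coe_period, smul_zero,
    sub_zero]

theorem sum_le_two_mul_tsum_of_pairwise_le_norm_sub {p δ : ℝ} (hδ : 0 < δ)
    {s : Finset (AddCircle p)} (hs : (s : Set (AddCircle p)).Pairwise fun u v => δ ≤ ‖u - v‖)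
    {f : AddCircle p → ℝ} {g : ℕ → ℝ} (hg : Summable g) (hg0 : ∀ k, 0 ≤ g k)
    (y : AddCircle p) (hfg : ∀ u ∈ s, ∀ k : ℕ, k * δ ≤ ‖u - y‖ → f u ≤ g k) :
    ∑ u ∈ s, f u ≤ 2 * ∑' k, g k := by
  -- The representatives `t u` of the points `u - y` lie in distinct cells `[kδ, (k + 1)δ)` with
  -- `k ∈ ℤ`, and for `k ≥ 0` the cells of `k` and `-k - 1` are both at distance `kδ` from `0`.
  choose t ht_coe ht_abs using fun u : AddCircle p => exists_coe_eq_abs_eq_norm (u - y)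
  let cell : AddCircle p → ℤ := fun u => ⌊t u / δ⌋
  let G : ℤ → ℝ := fun k => Int.rec g g k
  have hG : HasSum G (∑' k, g k + ∑' k, g k) := hg.hasSum.int_rec hg.hasSum
  have hG0 : ∀ k, 0 ≤ G k := by rintro (k | k) <;> exact hg0 k
  have hcell : Set.InjOn cell s := by
    intro u hu v hv huv
    by_contra hne
    have hlt : |t u - t v| < δ := by
      have := Int.abs_sub_lt_one_of_floor_eq_floor huv
      rwa [← sub_div, abs_div, abs_of_pos hδ, div_lt_one hδ] at this
    refine (hs hu hv hne).not_gt (lt_of_le_of_lt ?_ hlt)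
    calc ‖u - v‖ = ‖((t u - t v : ℝ) : AddCircle p)‖ := by
          rw [AddCircle.coe_sub, ht_coe, ht_coe, sub_sub_sub_cancel_right]
      _ ≤ |t u - t v| := QuotientAddGroup.norm_mk_le_norm
  have hfG : ∀ u ∈ s, f u ≤ G (cell u) := by
    intro u hu
    have hle : cell u * δ ≤ t u := (le_div_iff₀ hδ).1 (Int.floor_le _)
    have hlt : t u < (cell u + 1) * δ := (div_lt_iff₀ hδ).1 (Int.lt_floor_add_one _)
    rcases hk : cell u with k | k <;> rw [hk] at hle hlt
    · refine hfg u hu k ?_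
      rw [← ht_abs]
      exact le_trans (by simpa using hle) (le_abs_self _)
    · refine hfg u hu k ?_
      rw [← ht_abs]
      refine le_trans ?_ (neg_le_abs _)
      push_cast [Int.negSucc_eq] at hlt
      linarith
  calc ∑ u ∈ s, f u ≤ ∑ u ∈ s, G (cell u) := sum_le_sum hfG
    _ = ∑ k ∈ s.image cell, G k := (sum_image hcell).symm
    _ ≤ ∑' k, G k := hG.summable.sum_le_tsum _ fun k _ => hG0 k
    _ = 2 * ∑' k, g k := by rw [hG.tsum_eq, two_mul]

end Packing

section DirichletKernel

/-- The one-sided Dirichlet kernel `∑_{0 ≤ j < L} e(ju)`. -/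
noncomputable def dirichletKernel (L : ℕ) (u : UnitAddCircle) : ℂ :=
  ∑ j ∈ range L, fourier j u

theorem norm_fourier_apply {T : ℝ} (n : ℤ) (u : AddCircle T) : ‖fourier n u‖ = 1 :=
  Circle.norm_coe _

theorem four_mul_norm_le_norm_fourier_one_sub_one (u : UnitAddCircle) :
    4 * ‖u‖ ≤ ‖fourier 1 u - 1‖ := by
  obtain ⟨t, rfl, ht⟩ := exists_coe_eq_abs_eq_norm u
  have ht_half : |t| ≤ 1 / 2 := by
    simpa [ht] using AddCircle.norm_le_half_period 1 (x := (t : UnitAddCircle)) one_ne_zero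
  have hsin : 2 * |t| ≤ |Real.sin (π * t)| := by
    have := Real.mul_abs_le_abs_sin (x := π * t) (by
      rw [abs_mul, abs_of_pos Real.pi_pos]; nlinarith [Real.pi_pos])
    rwa [abs_mul, abs_of_pos Real.pi_pos, ← mul_assoc, div_mul_cancel₀ _ Real.pi_ne_zero] at this
  have hexp : fourier 1 (t : UnitAddCircle) = Complex.exp (Complex.I * ((2 * π * t : ℝ) : ℂ)) := by
    rw [fourier_coe_apply]
    congr 1
    push_cast
    ring
  rw [hexp, Complex.norm_exp_I_mul_ofReal_sub_one, ← ht, norm_mul, Real.norm_eq_abs,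
    Real.norm_eq_abs, abs_two, mul_assoc, mul_div_cancel_left₀ _ two_ne_zero]
  linarith

theorem norm_dirichletKernel_le (L : ℕ) (u : UnitAddCircle) : ‖dirichletKernel L u‖ ≤ L :=
  (norm_sum_le _ _).trans_eq <| by
    simp only [norm_fourier_apply, sum_const, card_range, nsmul_eq_mul, mul_one]

theorem norm_dirichletKernel_mul_norm_le (L : ℕ) (u : UnitAddCircle) :
    ‖dirichletKernel L u‖ * ‖u‖ ≤ 1 / 2 := by
  have hgeom : dirichletKernel L u * (fourier 1 u - 1) = fourier L u - 1 := by
    have hpow (j : ℕ) : fourier (j : ℤ) u = fourier 1 u ^ j := by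
      simp [fourier_apply, AddCircle.toCircle_nsmul]
    simp only [dirichletKernel, hpow, geom_sum_mul]
  have hle : ‖dirichletKernel L u‖ * ‖fourier 1 u - 1‖ ≤ 2 := by
    rw [← norm_mul, hgeom]
    refine (norm_sub_le _ _).trans_eq ?_
    rw [norm_fourier_apply, norm_one, one_add_one_eq_two]
  have := mul_le_mul_of_nonneg_left (four_mul_norm_le_norm_fourier_one_sub_one u)
    (norm_nonneg (dirichletKernel L u))
  linarith

variable {δ : ℝ}

theorem norm_dirichletKernel_sq_le (hδ : 0 < δ) (L : ℕ) {k : ℕ} {u : UnitAddCircle}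
    (hk : k * δ ≤ ‖u‖) :
    ‖dirichletKernel L u‖ ^ 2 ≤ (L + δ⁻¹ / 2) ^ 2 * (1 / ((k + 1 : ℕ) : ℝ) ^ 2) := by
  have hfar : ‖dirichletKernel L u‖ * k ≤ δ⁻¹ / 2 := by
    have := (mul_le_mul_of_nonneg_left hk (norm_nonneg (dirichletKernel L u))).trans
      (norm_dirichletKernel_mul_norm_le L u)
    rw [← mul_assoc, ← le_div_iff₀ hδ] at this
    exact this.trans_eq (by ring)
  rw [mul_one_div, le_div_iff₀ (by positivity), ← mul_pow]
  gcongr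
  push_cast
  linarith [norm_dirichletKernel_le L u]

theorem hasSum_one_div_nat_add_one_sq :
    HasSum (fun k : ℕ => 1 / ((k + 1 : ℕ) : ℝ) ^ 2) (π ^ 2 / 6) := by
  simpa using (hasSum_nat_add_iff' 1).2 hasSum_zeta_two

theorem sum_norm_dirichletKernel_sq_le (hδ : 0 < δ) {s : Finset UnitAddCircle}
    (hs : (s : Set UnitAddCircle).Pairwise fun u v => δ ≤ ‖u - v‖) (L : ℕ) (y : UnitAddCircle) :
    ∑ u ∈ s, ‖dirichletKernel L (u - y)‖ ^ 2 ≤ π ^ 2 / 3 * (L + δ⁻¹ / 2) ^ 2 := by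
  have hsum := hasSum_one_div_nat_add_one_sq.mul_left ((L + δ⁻¹ / 2) ^ 2)
  refine (sum_le_two_mul_tsum_of_pairwise_le_norm_sub hδ hs hsum.summable
    (fun k => by positivity) y fun u _ k hk => norm_dirichletKernel_sq_le hδ L hk).trans_eq ?_
  rw [hsum.tsum_eq]
  ring

end DirichletKernel

section Fejer

/-- Vectors whose Gram matrix consists of the Fejér-type kernels `|∑_{0 ≤ j < L} e(j(w - u))|²`,
see `inner_fejerVector`. -/
noncomputable def fejerVector (L : ℕ) (u : UnitAddCircle) : EuclideanSpace ℂ (Fin L × Fin L) :=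
  WithLp.toLp 2 fun q => fourier ((q.2 : ℤ) - q.1) u

theorem fourier_sub {T : ℝ} (m n : ℤ) (u : AddCircle T) :
    fourier (m - n) u = fourier m u * conj (fourier n u) := by
  rw [sub_eq_add_neg, fourier_add, fourier_neg]

theorem conj_fourier_mul_fourier {T : ℝ} (n : ℤ) (u w : AddCircle T) :
    conj (fourier n u) * fourier n w = fourier n (w - u) := by
  rw [← fourier_neg, fourier_apply, fourier_apply, fourier_apply, smul_sub, sub_eq_neg_add,
    AddCircle.toCircle_add, neg_smul, Circle.coe_mul]

theorem inner_fejerVector (L : ℕ) (u w : UnitAddCircle) :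
    ⟪fejerVector L u, fejerVector L w⟫_ℂ = ‖dirichletKernel L (w - u)‖ ^ 2 := by
  have hentry (q : Fin L × Fin L) :
      ⟪fejerVector L u q, fejerVector L w q⟫_ℂ =
        conj (fourier (q.1 : ℤ) (w - u)) * fourier (q.2 : ℤ) (w - u) := by
    rw [RCLike.inner_apply', fejerVector, fejerVector, conj_fourier_mul_fourier,
      fourier_sub, mul_comm]
  rw [PiLp.inner_apply, ← Complex.conj_mul', dirichletKernel, map_sum, sum_mul_sum,
    ← Fin.sum_univ_eq_sum_range fun i => ∑ j ∈ range L, conj (fourier i _) * fourier (j : ℤ) _,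
    Fintype.sum_prod_type]
  simp only [hentry, ← Fin.sum_univ_eq_sum_range fun j : ℕ => _ * fourier (j : ℤ) (w - u)]

variable {M N : ℕ}

theorem sum_ite_sub_eq_nsmul {A : Type*} [AddCommMonoid A] (hNM : N ≤ M) (g : ℕ → A) :
    ∑ q : Fin (2 * M) × Fin (2 * M),
      (if (q.2 : ℕ) < M ∧ (q.1 - q.2 : ℕ) ∈ Icc 1 N then g (q.1 - q.2) else 0) =
      M • ∑ n ∈ Icc 1 N, g n := by
  have hprod : M • ∑ n ∈ Icc 1 N, g n = ∑ q ∈ Icc 1 N ×ˢ range M, g q.1 := by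
    simp only [sum_product_right, sum_const, card_range]
  rw [hprod, ← sum_filter]
  refine sum_nbij (fun q => ((q.1 - q.2 : ℕ), (q.2 : ℕ))) ?_ ?_ ?_ fun _ _ => rfl
  · intro q hq
    simp_all
  · intro q hq r hr hqr
    simp only [coe_filter, mem_univ, true_and, mem_Icc, Set.mem_ofPred_eq] at hq hr
    simp only [Prod.mk.injEq] at hqr
    ext <;> omega
  · rintro ⟨n, j⟩ hnj
    simp only [coe_product, Set.mem_prod, mem_coe, mem_Icc, mem_range] at hnj
    refine ⟨(⟨n + j, by omega⟩, ⟨j, by omega⟩), ?_, ?_⟩ <;> simp [hnj]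

/-- The sequence `a 1, …, a N` written along the first `M` columns of a square array, shifted down
by `j` in column `j`: the entry at `(n + j, j)` is `a n`. It is paired with `fejerVector` to produce
exponential sums with coefficients `a`. The condition `1 ≤ q.1 - q.2` also excludes the entries
where the subtraction truncates. -/
noncomputable def shiftedCopies (M N : ℕ) (a : ℕ → ℂ) :
    EuclideanSpace ℂ (Fin (2 * M) × Fin (2 * M)) :=
  WithLp.toLp 2 fun q => if (q.2 : ℕ) < M ∧ (q.1 - q.2 : ℕ) ∈ Icc 1 N then a (q.1 - q.2) else 0

theorem norm_shiftedCopies_sq (hNM : N ≤ M) (a : ℕ → ℂ) :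
    ‖shiftedCopies M N a‖ ^ 2 = M * ∑ n ∈ Icc 1 N, ‖a n‖ ^ 2 := by
  rw [EuclideanSpace.norm_sq_eq, ← nsmul_eq_mul, ← sum_ite_sub_eq_nsmul hNM]
  refine sum_congr rfl fun q _ => ?_
  simp only [shiftedCopies, apply_ite norm, ite_pow, norm_zero, zero_pow two_ne_zero]

theorem inner_fejerVector_shiftedCopies (hNM : N ≤ M) (a : ℕ → ℂ) (u : UnitAddCircle) :
    ⟪fejerVector (2 * M) u, shiftedCopies M N a⟫_ℂ = M * ∑ n ∈ Icc 1 N, a n * fourier n u := by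
  rw [PiLp.inner_apply, ← nsmul_eq_mul, ← sum_ite_sub_eq_nsmul hNM]
  refine sum_congr rfl fun q _ => ?_
  simp only [RCLike.inner_apply', fejerVector, shiftedCopies, ← fourier_neg, mul_ite, mul_zero]
  refine ite_congr rfl (fun hq => ?_) fun _ => rfl
  have hle : (q.2 : ℕ) ≤ q.1 := by have := (mem_Icc.1 hq.2).1; omega
  rw [neg_sub, mul_comm, Nat.cast_sub hle]

end Fejer

section AdditiveLargeSieve

variable {δ : ℝ} {s : Finset UnitAddCircle} {M N : ℕ}

theorem sq_mul_sum_norm_sum_fourier_sq_le (hδ : 0 < δ)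
    (hs : (s : Set UnitAddCircle).Pairwise fun u v => δ ≤ ‖u - v‖) (hNM : N ≤ M) (a : ℕ → ℂ) :
    M ^ 2 * ∑ u ∈ s, ‖∑ n ∈ Icc 1 N, a n * fourier n u‖ ^ 2 ≤
      π ^ 2 / 3 * ((2 * M : ℕ) + δ⁻¹ / 2) ^ 2 * (M * ∑ n ∈ Icc 1 N, ‖a n‖ ^ 2) := by
  have hR (u) (_ : u ∈ s) : ∑ w ∈ s, ‖⟪fejerVector (2 * M) u, fejerVector (2 * M) w⟫_ℂ‖ ≤
      π ^ 2 / 3 * ((2 * M : ℕ) + δ⁻¹ / 2) ^ 2 := by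
    simpa only [inner_fejerVector, norm_pow, Complex.norm_real, norm_norm]
      using sum_norm_dirichletKernel_sq_le hδ hs (2 * M) u
  simpa only [inner_fejerVector_shiftedCopies hNM, norm_shiftedCopies_sq hNM, norm_mul,
    Complex.norm_natCast, mul_pow, ← mul_sum]
    using sum_norm_inner_sq_le (by positivity) hR (shiftedCopies M N a)

theorem sum_norm_sum_fourier_sq_le (hδ : 0 < δ)
    (hs : (s : Set UnitAddCircle).Pairwise fun u v => δ ≤ ‖u - v‖) (N : ℕ) (a : ℕ → ℂ) :
    ∑ u ∈ s, ‖∑ n ∈ Icc 1 N, a n * fourier n u‖ ^ 2 ≤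
      21 * (δ⁻¹ + N) * ∑ n ∈ Icc 1 N, ‖a n‖ ^ 2 := by
  rcases N.eq_zero_or_pos with rfl | hN
  · simp
  let M := N + ⌊δ⁻¹⌋₊
  have hδM : δ⁻¹ ≤ M := by
    have hN1 : (1 : ℝ) ≤ N := mod_cast hN
    push_cast [M]
    linarith [Nat.lt_floor_add_one δ⁻¹]
  have hM_le : (M : ℝ) ≤ δ⁻¹ + N := by
    push_cast [M]
    linarith [Nat.floor_le (inv_pos.2 hδ).le]
  have hM0 : (0 : ℝ) < M := (inv_pos.2 hδ).trans_le hδM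
  have hR : π ^ 2 / 3 * ((2 * M : ℕ) + δ⁻¹ / 2) ^ 2 ≤ 21 * (M : ℝ) ^ 2 :=
    calc π ^ 2 / 3 * ((2 * M : ℕ) + δ⁻¹ / 2) ^ 2
        ≤ 3.15 ^ 2 / 3 * (2 * M + M / 2) ^ 2 := by
          have := Real.pi_lt_d2
          push_cast
          gcongr
      _ ≤ 21 * (M : ℝ) ^ 2 := by linarith [sq_nonneg (M : ℝ)]
  have hM : ∑ u ∈ s, ‖∑ n ∈ Icc 1 N, a n * fourier n u‖ ^ 2 ≤
      21 * M * ∑ n ∈ Icc 1 N, ‖a n‖ ^ 2 := by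
    refine le_of_mul_le_mul_left ?_ (pow_pos hM0 2)
    calc _ ≤ π ^ 2 / 3 * ((2 * M : ℕ) + δ⁻¹ / 2) ^ 2 * (M * ∑ n ∈ Icc 1 N, ‖a n‖ ^ 2) :=
          sq_mul_sum_norm_sum_fourier_sq_le hδ hs (Nat.le_add_right _ _) a
      _ ≤ 21 * M ^ 2 * (M * ∑ n ∈ Icc 1 N, ‖a n‖ ^ 2) := by gcongr
      _ = M ^ 2 * (21 * M * ∑ n ∈ Icc 1 N, ‖a n‖ ^ 2) := by ring
  exact hM.trans (by gcongr)

end AdditiveLargeSieve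

section FareyPoints

theorem finite_addOrderOf_mem_Icc (D : ℕ) :
    {u : UnitAddCircle | addOrderOf u ∈ Set.Icc 1 D}.Finite :=
  (Set.finite_Icc 1 D).preimage' fun _ hd => AddCircle.finite_setOfPred_addOrderOf_eq 1 hd.1

/-- The Farey fractions `a / d` with `(a, d) = 1` and `1 ≤ d ≤ D`, modulo `1`: these are exactly
the points of additive order at most `D`. -/
noncomputable def fareyPoints (D : ℕ) : Finset UnitAddCircle :=
  (finite_addOrderOf_mem_Icc D).toFinset

variable {D d : ℕ} {u : UnitAddCircle}

theorem mem_fareyPoints : u ∈ fareyPoints D ↔ addOrderOf u ∈ Icc 1 D := by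
  simp [fareyPoints]

theorem pairwise_fareyPoints_le_norm_sub (D : ℕ) :
    (fareyPoints D : Set UnitAddCircle).Pairwise fun u v => ((D : ℝ) ^ 2)⁻¹ ≤ ‖u - v‖ := by
  intro u hu v hv huv
  obtain ⟨hu1, huD⟩ := mem_Icc.1 (mem_fareyPoints.1 hu)
  obtain ⟨hv1, hvD⟩ := mem_Icc.1 (mem_fareyPoints.1 hv)
  have hzero : (addOrderOf u * addOrderOf v) • (u - v) = 0 := by
    rw [smul_sub, mul_nsmul, addOrderOf_nsmul_eq_zero, mul_nsmul', addOrderOf_nsmul_eq_zero]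
    simp
  have hpos : 0 < addOrderOf u * addOrderOf v := Nat.mul_pos hu1 hv1
  have hord : addOrderOf (u - v) ≤ D ^ 2 :=
    (addOrderOf_le_of_nsmul_eq_zero hpos hzero).trans <| by rw [sq]; gcongr
  have hone : 1 ≤ addOrderOf (u - v) • ‖u - v‖ :=
    AddCircle.le_add_order_smul_norm_of_isOfFinAddOrder
      (isOfFinAddOrder_iff_nsmul_eq_zero.2 ⟨_, hpos, hzero⟩) (sub_ne_zero.2 huv)
  rw [nsmul_eq_mul] at hone
  have hD : (0 : ℝ) < (D : ℝ) ^ 2 := by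
    have : 0 < D := hu1.trans huD
    positivity
  rw [inv_le_iff_one_le_mul₀' hD]
  refine hone.trans ?_
  gcongr
  exact_mod_cast hord

theorem stdAddChar_mul_natCast [NeZero d] (a : ZMod d) (n : ℕ) :
    ZMod.stdAddChar (a * (n : ZMod d)) = fourier n (ZMod.toAddCircle a) := by
  rw [mul_comm, ← nsmul_eq_mul, ZMod.stdAddChar_apply, fourier_apply, natCast_zsmul, ← map_nsmul]
  rfl

theorem addOrderOf_toAddCircle [NeZero d] {a : ZMod d} (ha : IsUnit a) :
    addOrderOf (ZMod.toAddCircle a) = d := by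
  have hcop : d.Coprime a.val := by
    rw [Nat.coprime_comm, ← ZMod.isUnit_iff_coprime, ZMod.natCast_zmod_val]
    exact ha
  rw [addOrderOf_injective ZMod.toAddCircle (ZMod.toAddCircle_injective d),
    ← ZMod.natCast_zmod_val a, ZMod.addOrderOf_coe _ (NeZero.ne d), hcop, Nat.div_one]

theorem sum_toAddCircle_le_sum_fareyPoints [NeZero d] (hd : d ≤ D) {f : UnitAddCircle → ℝ}
    (hf : ∀ u, 0 ≤ f u) :
    ∑ a : ZMod d with IsUnit a, f (ZMod.toAddCircle a) ≤
      ∑ u ∈ fareyPoints D with addOrderOf u = d, f u := by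
  rw [← sum_image (ZMod.toAddCircle_injective d).injOn]
  refine sum_le_sum_of_subset_of_nonneg ?_ fun u _ _ => hf u
  rw [image_subset_iff]
  intro a ha
  have hord := addOrderOf_toAddCircle (mem_filter.1 ha).2
  rw [mem_filter, mem_fareyPoints, hord, mem_Icc]
  exact ⟨⟨NeZero.one_le, hd⟩, rfl⟩

end FareyPoints

section Characters

open DirichletCharacter ZMod

variable {d : ℕ}

theorem isPrimitive_inv {R : Type*} [CommMonoidWithZero R] {χ : DirichletCharacter R d}
    (hχ : χ.IsPrimitive) : χ⁻¹.IsPrimitive :=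
  (conductor_inv χ).trans hχ

variable [NeZero d]

theorem norm_gaussSum_sq_of_isPrimitive {χ : DirichletCharacter ℂ d} (hχ : χ.IsPrimitive) :
    ‖gaussSum χ stdAddChar‖ ^ 2 = d := by
  have hconj : 𝓕 (𝓕 χ) (-1) = conj (gaussSum χ stdAddChar) * gaussSum χ stdAddChar := by
    rw [starRingEnd_apply, star_gaussSum_eq, gaussSum, sum_mul, dft_apply,
      ← Equiv.sum_comp (Equiv.neg (ZMod d))]
    refine sum_congr rfl fun a _ => ?_
    rw [hχ.fourierTransform_eq_inv_mul_gaussSum, AddChar.inv_apply, Equiv.neg_apply, neg_mul_neg,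
      mul_one, neg_neg, smul_eq_mul, ← mul_assoc, mul_comm (stdAddChar _)]
  simp only [dft_dft, neg_neg, map_one, smul_eq_mul, mul_one, Complex.conj_mul'] at hconj
  exact_mod_cast hconj.symm

theorem sum_conj_mul_eq_ite (a b : ZMod d) :
    ∑ χ : DirichletCharacter ℂ d, conj (χ a) * χ b =
      if IsUnit a ∧ a = b then (d.totient : ℂ) else 0 := by
  by_cases ha : IsUnit a
  · have hconj (χ : DirichletCharacter ℂ d) : conj (χ a) = χ a⁻¹ := by
      obtain ⟨u, rfl⟩ := ha
      rw [starRingEnd_apply, MulChar.star_apply', MulChar.inv_apply, Ring.inverse_unit,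
        inv_coe_unit]
    simp only [hconj, ha, true_and, sum_char_inv_mul_char_eq ℂ ha b]
  · simp [ha, MulChar.map_nonunit]

theorem sum_norm_sum_mul_sq_eq (F : ZMod d → ℂ) :
    ∑ χ : DirichletCharacter ℂ d, ‖∑ a, χ a * F a‖ ^ 2 =
      d.totient * ∑ a with IsUnit a, ‖F a‖ ^ 2 := by
  have hexpand (χ : DirichletCharacter ℂ d) : (‖∑ a, χ a * F a‖ ^ 2 : ℂ) =
      ∑ a, ∑ b, conj (F a) * F b * (conj (χ a) * χ b) := by
    rw [← Complex.conj_mul', map_sum, sum_mul_sum]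
    refine sum_congr rfl fun a _ => sum_congr rfl fun b _ => ?_
    rw [map_mul]
    ring
  have hcomplex : ∑ χ : DirichletCharacter ℂ d, (‖∑ a, χ a * F a‖ ^ 2 : ℂ) =
      d.totient * ∑ a with IsUnit a, (‖F a‖ ^ 2 : ℂ) :=
    calc _ = ∑ a, ∑ b, conj (F a) * F b * ∑ χ : DirichletCharacter ℂ d, conj (χ a) * χ b := by
          simp only [hexpand, mul_sum]
          rw [sum_comm]
          exact sum_congr rfl fun a _ => sum_comm
      _ = ∑ a with IsUnit a, conj (F a) * F a * d.totient := by
          simp [sum_conj_mul_eq_ite, ite_and, sum_filter]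
      _ = _ := by rw [← sum_mul, mul_comm]; simp only [Complex.conj_mul']
  exact_mod_cast hcomplex

variable {ι : Type*} (A : Finset ι) (γ : ι → ℂ) (r : ι → ZMod d)

theorem sum_inv_mul_sum_stdAddChar {χ : DirichletCharacter ℂ d} (hχ : χ.IsPrimitive) :
    ∑ a, χ⁻¹ a * ∑ n ∈ A, γ n * stdAddChar (a * r n) =
      (∑ n ∈ A, γ n * χ (r n)) * gaussSum χ⁻¹ stdAddChar := by
  simp only [mul_sum, sum_mul]
  rw [sum_comm]
  refine sum_congr rfl fun n _ => ?_
  have hshift := gaussSum_mulShift_of_isPrimitive stdAddChar (isPrimitive_inv hχ) (r n)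
  rw [inv_inv] at hshift
  rw [mul_assoc, ← hshift, gaussSum, mul_sum]
  refine sum_congr rfl fun a _ => ?_
  rw [AddChar.mulShift_apply, mul_comm a, mul_left_comm]

theorem norm_sum_mul_char_sq_eq {χ : DirichletCharacter ℂ d} (hχ : χ.IsPrimitive) :
    d * ‖∑ n ∈ A, γ n * χ (r n)‖ ^ 2 =
      ‖∑ a, χ⁻¹ a * ∑ n ∈ A, γ n * stdAddChar (a * r n)‖ ^ 2 := by
  rw [sum_inv_mul_sum_stdAddChar A γ r hχ, norm_mul, mul_pow,
    norm_gaussSum_sq_of_isPrimitive (isPrimitive_inv hχ), mul_comm]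

theorem sum_isPrimitive_norm_sum_sq_le :
    d / d.totient * ∑ χ : DirichletCharacter ℂ d with χ.IsPrimitive,
        ‖∑ n ∈ A, γ n * χ (r n)‖ ^ 2 ≤
      ∑ a with IsUnit a, ‖∑ n ∈ A, γ n * stdAddChar (a * r n)‖ ^ 2 := by
  have hφ : (0 : ℝ) < d.totient := mod_cast Nat.totient_pos.2 (NeZero.pos d)
  rw [div_mul_eq_mul_div, div_le_iff₀' hφ, ← sum_norm_sum_mul_sq_eq, mul_sum,
    ← Equiv.sum_comp (Equiv.inv (DirichletCharacter ℂ d))]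
  calc _ = ∑ χ : DirichletCharacter ℂ d with χ.IsPrimitive,
          ‖∑ a, χ⁻¹ a * ∑ n ∈ A, γ n * stdAddChar (a * r n)‖ ^ 2 :=
        sum_congr rfl fun χ hχ => norm_sum_mul_char_sq_eq A γ r (mem_filter.1 hχ).2
    _ ≤ _ := sum_le_sum_of_subset_of_nonneg (filter_subset _ _) fun _ _ _ => sq_nonneg _

end Characters

end LargeSieve

open LargeSieve

/-- Bombieri–Davenport multiplicative large sieve inequality: for `D, N ≥ 1` and complex
numbers `γ_n`,
`∑_{d ≤ D} (d/φ(d)) ∑*_{χ mod d} |∑_{n ≤ N} γ_n χ(n)|² ≪ (D² + N) ∑_{n ≤ N} |γ_n|²`,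
where `∑*` is over primitive Dirichlet characters mod `d`, with an absolute constant. -/
theorem stmt_11 :
    ∃ C : ℝ, 0 < C ∧ ∀ (D N : ℕ), 1 ≤ D → 1 ≤ N → ∀ γ : ℕ → ℂ,
      ∑ d ∈ Finset.Icc 1 D, ((d : ℝ) / (Nat.totient d : ℝ)) *
        ∑ χ ∈ Finset.univ.filter (fun χ : DirichletCharacter ℂ d => χ.IsPrimitive),
          ‖∑ n ∈ Finset.Icc 1 N, γ n * χ (n : ZMod d)‖ ^ 2 ≤
      C * ((D : ℝ) ^ 2 + (N : ℝ)) * ∑ n ∈ Finset.Icc 1 N, ‖γ n‖ ^ 2 := by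
  refine ⟨21, by norm_num, fun D N hD _ γ => ?_⟩
  let S (u : UnitAddCircle) : ℂ := ∑ n ∈ Finset.Icc 1 N, γ n * fourier n u
  calc _ ≤ ∑ d ∈ Finset.Icc 1 D, ∑ u ∈ fareyPoints D with addOrderOf u = d, ‖S u‖ ^ 2 := by
        refine Finset.sum_le_sum fun d hd => ?_
        obtain ⟨hd1, hdD⟩ := Finset.mem_Icc.1 hd
        have : NeZero d := ⟨Nat.one_le_iff_ne_zero.1 hd1⟩
        refine (sum_isPrimitive_norm_sum_sq_le (Finset.Icc 1 N) γ (Nat.cast : ℕ → ZMod d)).trans ?_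
        simp only [stdAddChar_mul_natCast]
        exact sum_toAddCircle_le_sum_fareyPoints hdD (f := fun u => ‖S u‖ ^ 2) fun _ => sq_nonneg _
    _ = ∑ u ∈ fareyPoints D, ‖S u‖ ^ 2 :=
        Finset.sum_fiberwise_of_maps_to (fun u hu => mem_fareyPoints.1 hu) _
    _ ≤ _ := by
        have hδ : 0 < ((D : ℝ) ^ 2)⁻¹ := by positivity
        simpa only [inv_inv] using
          sum_norm_sum_fourier_sq_le hδ (pairwise_fareyPoints_le_norm_sub D) N γ
end
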